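/- arXiv:2510.04099 — 2 statements merged into one kernel-verified Lean document; each statement's English description precedes it below -/
import Mathlib

section
/- For every odd integer m ≥ 3, the harmonic frame E_m satisfies β_{E_m} = (1 − 1/(m·sin(π/(2m))))^{−1/2}, and this equals the minimal condition number: β_{E_m} = min{β_A : A ∈ ℝ^{m×2}}. -/
noncomputable section

open Real
open scoped RealInnerProductSpace ENNReal

/-- ℝ² as a Euclidean space. -/
abbrev E2 : Type := EuclideanSpace ℝ (Fin 2)

/-- The vector `(x, y)` in ℝ². -/
def vec2 (x y : ℝ) : E2 := (WithLp.equiv 2 (Fin 2 → ℝ)).symm ![x, y]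

/-- The coordinates of a vector in ℝ². -/
def toFun2 (v : E2) : Fin 2 → ℝ := WithLp.equiv 2 (Fin 2 → ℝ) v

/-- The phaseless measurement map `Φ_A(x) = (|⟨a_j, x⟩|)_j`. -/
def PhiMap {m : ℕ} (a : Fin m → E2) (x : E2) : EuclideanSpace ℝ (Fin m) :=
  (WithLp.equiv 2 (Fin m → ℝ)).symm fun j => |⟪a j, x⟫|

/-- The distance `dist(x,y) = min ‖x − y‖ ‖x + y‖` (real phase retrieval distance). -/
def pdist (x y : E2) : ℝ := min ‖x - y‖ ‖x + y‖

/-- The set of Lipschitz ratios of the phaseless measurement map. -/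
def ratioSet {m : ℕ} (a : Fin m → E2) : Set ℝ :=
  {r | ∃ x y : E2, pdist x y ≠ 0 ∧ r = ‖PhiMap a x - PhiMap a y‖ / pdist x y}

/-- The optimal lower Lipschitz constant `L_A`. -/
def lipL {m : ℕ} (a : Fin m → E2) : ℝ := sInf (ratioSet a)

/-- The optimal upper Lipschitz constant `U_A`. -/
def lipU {m : ℕ} (a : Fin m → E2) : ℝ := sSup (ratioSet a)

/-- The condition number `β_A = U_A / L_A`, with `β_A = +∞` when `L_A = 0`. -/
def condNum {m : ℕ} (a : Fin m → E2) : ℝ≥0∞ :=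
  if lipL a = 0 then ⊤ else ENNReal.ofReal (lipU a / lipL a)

/-- An edge family: nonzero vectors with pairwise distinct directions summing to zero
(the edge vectors of a strictly convex polygon). -/
def IsEdgeFamily {m : ℕ} (e : Fin m → E2) : Prop :=
  (∀ j, e j ≠ 0) ∧
  (∀ i j : Fin m, i ≠ j → ‖e i‖⁻¹ • e i ≠ ‖e j‖⁻¹ • e j) ∧
  ∑ j, e j = 0

/-- The diameter-to-perimeter ratio of the polygon with edge vectors `e`. -/
def rRatio {m : ℕ} (e : Fin m → E2) : ℝ :=
  sSup {s | ∃ u : E2, ‖u‖ = 1 ∧ s = ∑ j, |⟪e j, u⟫|} / (2 * ∑ j, ‖e j‖)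

/-- An optimal edge family: minimizes `rRatio` among all edge families of size `m`. -/
def IsOptimalEdgeFamily {m : ℕ} (e : Fin m → E2) : Prop :=
  IsEdgeFamily e ∧ ∀ e' : Fin m → E2, IsEdgeFamily e' → rRatio e ≤ rRatio e'

/-- The complex square map on ℝ² ≅ ℂ: `f(t·(cos φ, sin φ)) = t²·(cos 2φ, sin 2φ)`. -/
def csq (v : E2) : E2 :=
  vec2 (toFun2 v 0 ^ 2 - toFun2 v 1 ^ 2) (2 * toFun2 v 0 * toFun2 v 1)

/-- The harmonic frame `E_m`: the `j`-th row is `(cos((j−1)π/m), sin((j−1)π/m))`, `j = 1,…,m`. -/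
def harmonicFrame (m : ℕ) : Fin m → E2 :=
  fun j => vec2 (Real.cos ((j : ℕ) * π / m)) (Real.sin ((j : ℕ) * π / m))


theorem h_polar (u : E2) : ∃ μ : ℝ, u 0 = ‖u‖ * Real.cos μ ∧ u 1 = ‖u‖ * Real.sin μ := by
  have hn : ‖u‖ = ‖(⟨u 0, u 1⟩ : ℂ)‖ := by
    rw [EuclideanSpace.norm_eq, Complex.norm_def, Complex.normSq_apply, Fin.sum_univ_two]
    simp [sq]
  refine ⟨Complex.arg ⟨u 0, u 1⟩, ?_, ?_⟩
  · rw [hn, Complex.norm_mul_cos_arg]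
  · rw [hn, Complex.norm_mul_sin_arg]

theorem h_inner (a x : E2) : ⟪a, x⟫ = a 0 * x 0 + a 1 * x 1 := by
  simp [PiLp.inner_apply, Fin.sum_univ_two, mul_comm]

theorem h_vec2_0 (x y : ℝ) : (vec2 x y) 0 = x := by simp [vec2]
theorem h_vec2_1 (x y : ℝ) : (vec2 x y) 1 = y := by simp [vec2]

theorem h_norm_vec2 (R μ : ℝ) (hR : 0 ≤ R) :
    ‖vec2 (R * Real.cos μ) (R * Real.sin μ)‖ = R := by
  rw [EuclideanSpace.norm_eq, Fin.sum_univ_two, h_vec2_0, h_vec2_1]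
  simp only [Real.norm_eq_abs, sq_abs]
  rw [show (R * Real.cos μ) ^ 2 + (R * Real.sin μ) ^ 2 = R ^ 2 by
    nlinarith [Real.sin_sq_add_cos_sq μ], Real.sqrt_sq hR]

theorem h_abs (p q : ℝ) : (|p| - |q|) ^ 2 = min ((p - q) ^ 2) ((p + q) ^ 2) := by
  rcases abs_cases p with ⟨h1, h2⟩ | ⟨h1, h2⟩ <;> rcases abs_cases q with ⟨h3, h4⟩ | ⟨h3, h4⟩ <;>
    rw [h1, h3]
  · rw [min_eq_left]; nlinarith
  · rw [min_eq_right] <;> nlinarith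
  · rw [min_eq_right] <;> nlinarith
  · rw [min_eq_left] <;> nlinarith

theorem h_phi {m : ℕ} (a : Fin m → E2) (x y : E2) :
    ‖PhiMap a x - PhiMap a y‖ ^ 2 = ∑ j, min (⟪a j, x - y⟫ ^ 2) (⟪a j, x + y⟫ ^ 2) := by
  rw [EuclideanSpace.norm_sq_eq]
  refine Finset.sum_congr rfl fun j _ => ?_
  rw [inner_sub_right, inner_add_right, ← h_abs]
  simp [PhiMap]

theorem h_pdist_nonneg (x y : E2) : 0 ≤ pdist x y := le_min (norm_nonneg _) (norm_nonneg _)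

theorem h_jensen {m : ℕ} (hm : 1 ≤ m) (δ : ℕ → ℝ) (h0 : ∀ k < m, 0 ≤ δ k)
    (hs : ∑ k ∈ Finset.range m, δ k = π) :
    ∑ k ∈ Finset.range m, Real.sin (δ k / 2) ≤ m * Real.sin (π / (2 * m)) := by
  have hle : ∀ k < m, δ k ≤ π := fun k hk => by
    rw [← hs]
    exact Finset.single_le_sum (f := δ) (fun i hi => h0 i (Finset.mem_range.1 hi))
      (Finset.mem_range.2 hk)
  have hm0 : (0 : ℝ) < m := by exact_mod_cast hm
  have := strictConcaveOn_sin_Icc.concaveOn.le_map_sum (t := Finset.range m)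
    (w := fun _ => (m : ℝ)⁻¹) (p := fun k => δ k / 2) (fun _ _ => by positivity)
    (by simp [hm0.ne']) (fun k hk => by
      have hk' := Finset.mem_range.1 hk
      constructor
      · linarith [h0 k hk']
      · linarith [hle k hk', h0 k hk'])
  simp only [smul_eq_mul] at this
  rw [← Finset.mul_sum, ← Finset.mul_sum, ← Finset.sum_div, hs] at this
  have e : (m : ℝ)⁻¹ * (π / 2) = π / (2 * m) := by field_simp
  rw [e] at this
  have := mul_le_mul_of_nonneg_left this hm0.le
  rwa [← mul_assoc, mul_inv_cancel₀ hm0.ne', one_mul] at this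

theorem h_tv (f : ℕ → ℝ) (j m : ℕ) (hj : j ≤ m) :
    |f 0 - f j| + |f j - f m| ≤ ∑ k ∈ Finset.range m, |f k - f (k + 1)| := by
  have key : ∀ n i, |f i - f (i + n)| ≤ ∑ k ∈ Finset.range n, |f (i + k) - f (i + k + 1)| := by
    intro n i
    induction n with
    | zero => simp
    | succ n ih =>
      rw [Finset.sum_range_succ]
      have := abs_sub_le (f i) (f (i + n)) (f (i + (n + 1)))
      rw [← add_assoc] at this ⊢
      linarith
  obtain ⟨n, rfl⟩ := Nat.exists_eq_add_of_le hj
  rw [Finset.sum_range_add]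
  have h1 := key j 0
  have h2 := key n j
  simp only [zero_add] at h1
  linarith

/-- sorted version of the key inequality -/
theorem h_sorted {m : ℕ} (hm : 1 ≤ m) (r θ : ℕ → ℝ) (hr : ∀ k, 0 ≤ r k)
    (hθ : ∀ k < m, θ k ≤ θ (k + 1)) (hend : θ m = θ 0 + π) (D : ℝ)
    (hD : ∀ ψ, ∑ j ∈ Finset.range m, r j * |Real.cos (θ j - ψ)| ≤ D) :
    ∑ j ∈ Finset.range m, r j ≤ D * (m * Real.sin (π / (2 * m))) := by
  have hsum : ∑ k ∈ Finset.range m, (θ (k + 1) - θ k) = π := by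
    rw [Finset.sum_range_sub, hend]; ring
  have hJ := h_jensen hm (fun k => θ (k + 1) - θ k) (fun k hk => sub_nonneg.2 (hθ k hk)) hsum
  have hle : ∀ k < m, θ (k + 1) - θ k ≤ π := fun k hk => by
    rw [← hsum]
    exact Finset.single_le_sum (f := fun k => θ (k + 1) - θ k)
      (fun i hi => sub_nonneg.2 (hθ i (Finset.mem_range.1 hi))) (Finset.mem_range.2 hk)
  have hsn : ∀ k ∈ Finset.range m, 0 ≤ Real.sin ((θ (k + 1) - θ k) / 2) := fun k hk => by
    have hk' := Finset.mem_range.1 hk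
    have := hθ k hk'
    have := hle k hk'
    exact Real.sin_nonneg_of_nonneg_of_le_pi (by linarith) (by linarith)
  have hD0 : 0 ≤ D := le_trans (Finset.sum_nonneg fun j _ => mul_nonneg (hr j) (abs_nonneg _)) (hD 0)
  have h1 : ∀ j ∈ Finset.range m, r j ≤ ∑ k ∈ Finset.range m,
      Real.sin ((θ (k + 1) - θ k) / 2) * (r j * |Real.cos (θ j - ((θ k + θ (k + 1)) / 2 + π / 2))|) := by
    intro j hj
    have ht := h_tv (fun k => Real.cos (θ k - θ j)) j m (Finset.mem_range.1 hj).le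
    simp only [sub_self, Real.cos_zero, hend] at ht
    rw [show θ 0 + π - θ j = (θ 0 - θ j) + π by ring, Real.cos_add_pi] at ht
    have hc : ∑ k ∈ Finset.range m, |Real.cos (θ k - θ j) - Real.cos (θ (k + 1) - θ j)|
        = 2 * ∑ k ∈ Finset.range m, Real.sin ((θ (k + 1) - θ k) / 2) *
          |Real.cos (θ j - ((θ k + θ (k + 1)) / 2 + π / 2))| := by
      rw [Finset.mul_sum]
      refine Finset.sum_congr rfl fun k hk => ?_
      rw [Real.cos_sub_cos, show θ j - ((θ k + θ (k + 1)) / 2 + π / 2) =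
        -(((θ k - θ j + (θ (k + 1) - θ j)) / 2) + π / 2) by ring, Real.cos_neg, Real.cos_add_pi_div_two,
        show (θ k - θ j - (θ (k + 1) - θ j)) / 2 = -((θ (k + 1) - θ k) / 2) by ring, Real.sin_neg,
        abs_mul, abs_mul, abs_neg, abs_neg, abs_neg, abs_of_nonneg (hsn k hk), abs_two]
      ring
    rw [hc] at ht
    have h2 : 1 ≤ ∑ k ∈ Finset.range m, Real.sin ((θ (k + 1) - θ k) / 2) *
          |Real.cos (θ j - ((θ k + θ (k + 1)) / 2 + π / 2))| := by
      have a1 := neg_abs_le (Real.cos (θ 0 - θ j) - 1)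
      have a2 := le_abs_self (1 - -Real.cos (θ 0 - θ j))
      linarith
    calc r j = r j * 1 := by ring
      _ ≤ _ := mul_le_mul_of_nonneg_left h2 (hr j)
      _ = _ := by
        rw [Finset.mul_sum]
        exact Finset.sum_congr rfl fun k _ => by ring
  calc _ ≤ _ := Finset.sum_le_sum h1
    _ = ∑ k ∈ Finset.range m, Real.sin ((θ (k + 1) - θ k) / 2) *
        ∑ j ∈ Finset.range m, r j * |Real.cos (θ j - ((θ k + θ (k + 1)) / 2 + π / 2))| := by
      rw [Finset.sum_comm]
      exact Finset.sum_congr rfl fun k _ => by rw [Finset.mul_sum]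
    _ ≤ ∑ k ∈ Finset.range m, Real.sin ((θ (k + 1) - θ k) / 2) * D :=
      Finset.sum_le_sum fun k hk => mul_le_mul_of_nonneg_left (hD _) (hsn k hk)
    _ ≤ _ := by
      rw [← Finset.sum_mul, mul_comm]
      exact mul_le_mul_of_nonneg_left hJ hD0

theorem h_abs_cos_int (x : ℝ) (n : ℤ) : |Real.cos (x - n * π)| = |Real.cos x| := by
  rw [Real.cos_sub_int_mul_pi, abs_mul, abs_zpow]; simp

theorem h_key {m : ℕ} (hm : 1 ≤ m) (r γ : Fin m → ℝ) (hr : ∀ k, 0 ≤ r k) (D : ℝ)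
    (hD : ∀ ψ, ∑ j, r j * |Real.cos (γ j - ψ)| ≤ D) :
    ∑ j, r j ≤ D * (m * Real.sin (π / (2 * m))) := by
  set t : Fin m → ℝ := fun j => toIcoMod pi_pos 0 (γ j) with ht
  have htm : ∀ j, 0 ≤ t j ∧ t j < π := fun j => by
    have := toIcoMod_mem_Ico pi_pos 0 (γ j)
    simpa using this
  have htc : ∀ j ψ, |Real.cos (t j - ψ)| = |Real.cos (γ j - ψ)| := fun j ψ => by
    have : t j = γ j - toIcoDiv pi_pos 0 (γ j) * π := by
      rw [← zsmul_eq_mul, self_sub_toIcoDiv_zsmul]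
    rw [this, show γ j - toIcoDiv pi_pos 0 (γ j) * π - ψ
      = (γ j - ψ) - toIcoDiv pi_pos 0 (γ j) * π by ring, h_abs_cos_int]
  set σ := Tuple.sort t
  have hmono : Monotone (t ∘ σ) := Tuple.monotone_sort t
  have hm' : 0 < m := hm
  set θ : ℕ → ℝ := fun k => if h : k < m then t (σ ⟨k, h⟩) else t (σ ⟨0, hm'⟩) + π with hθ
  set r' : ℕ → ℝ := fun k => if h : k < m then r (σ ⟨k, h⟩) else 0 with hr'
  have hmain := h_sorted hm r' θ (fun k => by
      simp only [hr']; split_ifs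
      · exact hr _
      · exact le_rfl) (fun k hk => by
      simp only [hθ, hk, dif_pos]
      split_ifs with h
      · exact hmono (by simp)
      · linarith [(htm (σ ⟨k, hk⟩)).2, (htm (σ ⟨0, hm'⟩)).1]) (by simp [hθ, hm']) D (fun ψ => by
      rw [Finset.sum_range]
      refine le_trans (le_of_eq ?_) (hD ψ)
      rw [← Equiv.sum_comp σ (fun j => r j * |Real.cos (γ j - ψ)|)]
      refine Finset.sum_congr rfl fun j _ => ?_
      simp [hθ, hr', htc])
  refine le_trans (le_of_eq ?_) hmain
  rw [Finset.sum_range, ← Equiv.sum_comp σ r]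
  refine Finset.sum_congr rfl fun j _ => ?_
  simp [hr']

theorem h_ms {m : ℕ} (hm : 3 ≤ m) : 1 < m * Real.sin (π / (2 * m)) := by
  have hm0 : (3 : ℝ) ≤ m := by exact_mod_cast hm
  have h := Real.mul_lt_sin (x := π / (2 * m)) (by positivity) (by
    apply div_lt_div_of_pos_left pi_pos (by norm_num) (by linarith))
  have e : 2 / π * (π / (2 * m)) = 1 / m := by field_simp
  rw [e, div_lt_iff₀ (by linarith)] at h
  linarith

theorem h_sum_cos {m : ℕ} (hm : 3 ≤ m) (c : ℝ) :
    ∑ j ∈ Finset.range m, Real.cos (2 * (j * π / m) - c) = 0 := by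
  have hm0 : (3 : ℝ) ≤ m := by exact_mod_cast hm
  have hs : 0 < Real.sin (π / m) := Real.sin_pos_of_pos_of_lt_pi (by positivity)
    (div_lt_self pi_pos (by linarith))
  have : 2 * Real.sin (π / m) * ∑ j ∈ Finset.range m, Real.cos (2 * (j * π / m) - c) = 0 := by
    rw [Finset.mul_sum]
    have := Finset.sum_range_sub (fun j : ℕ => Real.sin (2 * (j * π / m) - c - π / m)) m
    rw [show Real.sin (2 * ((m : ℕ) * π / m) - c - π / m) = Real.sin (2 * ((0 : ℕ) * π / m) - c - π / m) by
      rw [← Real.sin_add_two_pi (2 * ((0 : ℕ) * π / m) - c - π / m)]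
      congr 1; push_cast; field_simp; ring, sub_self] at this
    rw [← this]
    refine Finset.sum_congr rfl fun j _ => ?_
    rw [Real.sin_sub_sin]
    rw [show (2 * (((j + 1 : ℕ) : ℝ) * π / m) - c - π / m - (2 * (j * π / m) - c - π / m)) / 2 = π / m by
      push_cast; ring, show (2 * (((j + 1 : ℕ) : ℝ) * π / m) - c - π / m + (2 * (j * π / m) - c - π / m)) / 2
        = 2 * (j * π / m) - c by push_cast; ring]
  have h2 : 2 * Real.sin (π / m) ≠ 0 := by positivity
  exact (mul_eq_zero.1 this).resolve_left h2

theorem h_int_abs_cos (a : ℝ) : ∫ x in a..(a + π), |Real.cos x| = 2 := by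
  have hp : Function.Periodic (fun x => |Real.cos x|) π := fun x => by
    simp [Real.cos_add_pi]
  rw [hp.intervalIntegral_add_eq a (-(π / 2))]
  rw [show -(π / 2) + π = π / 2 by ring]
  rw [intervalIntegral.integral_congr (g := Real.cos)]
  · simp; norm_num
  · intro x hx
    rw [Set.uIcc_of_le (by linarith [pi_pos])] at hx
    exact abs_of_nonneg (Real.cos_nonneg_of_mem_Icc hx)

theorem h_harm1 {m : ℕ} (hm : 3 ≤ m) (φ : ℝ) :
    ∑ k ∈ Finset.range m, |Real.cos (k * π / m - φ)| ≤ 1 / Real.sin (π / (2 * m)) := by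
  have hm0 : (3 : ℝ) ≤ m := by exact_mod_cast hm
  have hs : 0 < Real.sin (π / (2 * m)) := Real.sin_pos_of_pos_of_lt_pi (by positivity)
    (div_lt_self pi_pos (by linarith))
  rw [le_div_iff₀ hs]
  set a : ℕ → ℝ := fun k => k * π / m - φ - π / (2 * m) with ha
  have hint : ∀ x y : ℝ, IntervalIntegrable (fun x => |Real.cos x|) MeasureTheory.volume x y :=
    fun x y => (Real.continuous_cos.abs).intervalIntegrable x y
  have hstep : ∀ k ∈ Finset.range m, |Real.cos (k * π / m - φ)| * Real.sin (π / (2 * m)) * 2 ≤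
      ∫ x in (a k)..(a (k + 1)), |Real.cos x| := by
    intro k _
    have hle : a k ≤ a (k + 1) := by
      simp only [ha]; push_cast
      have : (0 : ℝ) ≤ π / m := by positivity
      have e : ((k : ℝ) + 1) * π / m = k * π / m + π / m := by ring
      linarith
    have h1 : |∫ x in (a k)..(a (k + 1)), Real.cos x| ≤ ∫ x in (a k)..(a (k + 1)), |Real.cos x| :=
      intervalIntegral.abs_integral_le_integral_abs hle
    refine le_trans (le_of_eq ?_) h1
    rw [integral_cos, Real.sin_sub_sin]
    have e1 : (a (k + 1) - a k) / 2 = π / (2 * m) := by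
      simp only [ha]; push_cast; field_simp; ring
    have e2 : (a (k + 1) + a k) / 2 = k * π / m - φ := by
      simp only [ha]; push_cast; field_simp; ring
    rw [e1, e2, abs_mul, abs_mul, abs_two, abs_of_pos hs]; ring
  have h2 := Finset.sum_le_sum hstep
  rw [intervalIntegral.sum_integral_adjacent_intervals (fun k _ => hint _ _)] at h2
  rw [show a m = a 0 + π by simp only [ha]; push_cast; field_simp; ring, h_int_abs_cos,
    ← Finset.sum_mul, ← Finset.sum_mul] at h2
  linarith

theorem h_evenodd (f : ℕ → ℝ) (p : ℕ) :
    ∑ j ∈ Finset.range (p + 1), f (2 * j) + ∑ i ∈ Finset.range p, f (2 * i + 1)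
      = ∑ k ∈ Finset.range (2 * p + 1), f k := by
  induction p with
  | zero => simp
  | succ p ih =>
    rw [Finset.sum_range_succ, Finset.sum_range_succ (fun i => f (2 * i + 1)) p, show 2 * (p + 1) + 1 = 2 * p + 1 + 1 + 1 by ring,
      Finset.sum_range_succ f (2 * p + 1 + 1), Finset.sum_range_succ f (2 * p + 1), ← ih]
    rw [show 2 * (p + 1) = 2 * p + 1 + 1 by ring]
    ring

theorem h_harm2 {m : ℕ} (hm : 3 ≤ m) (hodd : Odd m) (φ : ℝ) :
    ∑ k ∈ Finset.range m, |Real.cos (2 * (k * π / m) - φ)| ≤ 1 / Real.sin (π / (2 * m)) := by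
  refine le_trans (le_of_eq ?_) (h_harm1 hm φ)
  have hm0 : (3 : ℝ) ≤ m := by exact_mod_cast hm
  have hm1 : (m : ℝ) ≠ 0 := by positivity
  obtain ⟨p, hp⟩ := hodd
  set f : ℕ → ℝ := fun k => |Real.cos (k * π / m - φ)| with hf
  have hper : ∀ k, f (m + k) = f k := fun k => by
    simp only [hf]
    rw [show ((m + k : ℕ) : ℝ) * π / m - φ = (k * π / m - φ) + π by push_cast; field_simp; ring,
      Real.cos_add_pi, abs_neg]
  have h1 : ∀ k : ℕ, |Real.cos (2 * (k * π / m) - φ)| = f (2 * k) := fun k => by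
    simp only [hf]; congr 2; push_cast; ring
  rw [Finset.sum_congr rfl fun k _ => h1 k]
  have h2 := h_evenodd f p
  have h3 : Finset.range m = Finset.range (2 * p + 1) := by rw [hp]
  have h4 : Finset.range m = Finset.range (p + 1 + p) := by rw [hp]; congr 1; ring
  change _ = ∑ k ∈ Finset.range m, f k
  conv_rhs => rw [h3, ← h2]
  rw [h4, Finset.sum_range_add]
  congr 1
  refine Finset.sum_congr rfl fun i _ => ?_
  rw [← hper (2 * i + 1), hp]
  congr 1; ring

theorem h_min_lower (α μ ν : ℝ) :
    1 / 2 + (Real.cos (2 * α - 2 * μ) + Real.cos (2 * α - 2 * ν)) / 4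
      - |Real.cos (2 * α - (μ + ν + π / 2))| / 2 ≤
    min (Real.cos (α - μ) ^ 2) (Real.cos (α - ν) ^ 2) := by
  have e1 : Real.cos (2 * α - 2 * μ) = 2 * Real.cos (α - μ) ^ 2 - 1 := by
    rw [← Real.cos_two_mul]; congr 1; ring
  have e2 : Real.cos (2 * α - 2 * ν) = 2 * Real.cos (α - ν) ^ 2 - 1 := by
    rw [← Real.cos_two_mul]; congr 1; ring
  have e3 : Real.cos (2 * α - 2 * μ) - Real.cos (2 * α - 2 * ν) =
      -2 * Real.cos (2 * α - (μ + ν + π / 2)) * Real.sin (ν - μ) := by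
    rw [Real.cos_sub_cos, show 2 * α - (μ + ν + π / 2) = (2 * α - (μ + ν)) - π / 2 by ring,
      Real.cos_sub_pi_div_two]
    congr 3 <;> ring
  have e4 : |Real.cos (2 * α - 2 * μ) - Real.cos (2 * α - 2 * ν)| ≤
      2 * |Real.cos (2 * α - (μ + ν + π / 2))| := by
    rw [e3, abs_mul, abs_mul, abs_neg, abs_two]
    exact mul_le_of_le_one_right (by positivity) (Real.abs_sin_le_one _)
  have := abs_le.1 e4
  rw [le_min_iff]
  constructor <;> linarith [this.1, this.2]

theorem h_harm_inner {m : ℕ} (j : Fin m) (u : E2) (μ : ℝ) (h0 : u 0 = ‖u‖ * Real.cos μ)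
    (h1 : u 1 = ‖u‖ * Real.sin μ) :
    ⟪harmonicFrame m j, u⟫ ^ 2 = ‖u‖ ^ 2 * Real.cos ((j : ℕ) * π / m - μ) ^ 2 := by
  rw [h_inner, harmonicFrame, h_vec2_0, h_vec2_1, h0, h1, Real.cos_sub]; ring

theorem h_harm_low {m : ℕ} (hm : 3 ≤ m) (hodd : Odd m) (x y : E2) :
    (m / 2 - 1 / (2 * Real.sin (π / (2 * m)))) * pdist x y ^ 2 ≤
      ‖PhiMap (harmonicFrame m) x - PhiMap (harmonicFrame m) y‖ ^ 2 := by
  rw [h_phi]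
  obtain ⟨μ, hμ0, hμ1⟩ := h_polar (x - y)
  obtain ⟨ν, hν0, hν1⟩ := h_polar (x + y)
  have ht0 := h_pdist_nonneg x y
  have hs : ∀ j : Fin m, pdist x y ^ 2 * (1 / 2 + (Real.cos (2 * ((j : ℕ) * π / m) - 2 * μ)
      + Real.cos (2 * ((j : ℕ) * π / m) - 2 * ν)) / 4
      - |Real.cos (2 * ((j : ℕ) * π / m) - (μ + ν + π / 2))| / 2) ≤
      min (⟪harmonicFrame m j, x - y⟫ ^ 2) (⟪harmonicFrame m j, x + y⟫ ^ 2) := fun j => by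
    have hl := le_min_iff.1 (h_min_lower ((j : ℕ) * π / m) μ ν)
    rw [h_harm_inner j _ μ hμ0 hμ1, h_harm_inner j _ ν hν0 hν1]
    have a1 : pdist x y ^ 2 ≤ ‖x - y‖ ^ 2 := pow_le_pow_left₀ ht0 (min_le_left _ _) 2
    have a2 : pdist x y ^ 2 ≤ ‖x + y‖ ^ 2 := pow_le_pow_left₀ ht0 (min_le_right _ _) 2
    refine le_min ?_ ?_
    · exact (mul_le_mul_of_nonneg_left hl.1 (sq_nonneg _)).trans
        (mul_le_mul_of_nonneg_right a1 (sq_nonneg _))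
    · exact (mul_le_mul_of_nonneg_left hl.2 (sq_nonneg _)).trans
        (mul_le_mul_of_nonneg_right a2 (sq_nonneg _))
  refine le_trans ?_ (Finset.sum_le_sum fun j _ => hs j)
  rw [← Finset.mul_sum, mul_comm]
  refine mul_le_mul_of_nonneg_left ?_ (sq_nonneg _)
  rw [Finset.sum_sub_distrib, Finset.sum_add_distrib]
  simp only [← Finset.sum_div]
  rw [Finset.sum_add_distrib]
  have b1 := h_sum_cos hm (2 * μ)
  have b2 := h_sum_cos hm (2 * ν)
  have b3 := h_harm2 hm hodd (μ + ν + π / 2)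
  rw [Finset.sum_range] at b1 b2 b3
  rw [b1, b2]
  have e : 1 / (2 * Real.sin (π / (2 * m))) = 1 / Real.sin (π / (2 * m)) / 2 := by
    rw [one_div, one_div, mul_inv]; ring
  rw [e]
  simp only [Finset.sum_const, Finset.card_univ, Fintype.card_fin, nsmul_eq_mul]
  linarith

theorem h_harm_sq {m : ℕ} (hm : 3 ≤ m) (u : E2) :
    ∑ j, ⟪harmonicFrame m j, u⟫ ^ 2 = ‖u‖ ^ 2 * (m / 2) := by
  obtain ⟨μ, h0, h1⟩ := h_polar u
  rw [Finset.sum_congr rfl fun j _ => h_harm_inner j u μ h0 h1, ← Finset.mul_sum]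
  congr 1
  have b1 := h_sum_cos hm (2 * μ)
  rw [Finset.sum_range] at b1
  have : ∀ j : Fin m, Real.cos ((j : ℕ) * π / m - μ) ^ 2 =
      1 / 2 + Real.cos (2 * ((j : ℕ) * π / m) - 2 * μ) / 2 := fun j => by
    rw [Real.cos_sq]; congr 3; ring
  rw [Finset.sum_congr rfl fun j _ => this j, Finset.sum_add_distrib]
  simp only [← Finset.sum_div]
  rw [b1]
  simp

theorem h_up {m : ℕ} (a : Fin m → E2) (C : ℝ) (hC : ∀ u, ∑ j, ⟪a j, u⟫ ^ 2 ≤ ‖u‖ ^ 2 * C) (x y : E2) :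
    ‖PhiMap a x - PhiMap a y‖ ^ 2 ≤ C * pdist x y ^ 2 := by
  rw [h_phi, mul_comm]
  rcases min_choice ‖x - y‖ ‖x + y‖ with h | h
  · rw [pdist, h]
    exact (Finset.sum_le_sum fun j _ => min_le_left _ _).trans (hC _)
  · rw [pdist, h]
    exact (Finset.sum_le_sum fun j _ => min_le_right _ _).trans (hC _)

theorem h_ratio_le {m : ℕ} (a : Fin m → E2) (C : ℝ) (hC : ∀ u, ∑ j, ⟪a j, u⟫ ^ 2 ≤ ‖u‖ ^ 2 * C) :
    ∀ r ∈ ratioSet a, r ≤ √C := by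
  rintro r ⟨x, y, hxy, rfl⟩
  have hp : 0 < pdist x y := lt_of_le_of_ne (h_pdist_nonneg x y) hxy.symm
  apply Real.le_sqrt_of_sq_le
  rw [div_pow, div_le_iff₀ (by positivity)]
  exact h_up a C hC x y

theorem h_mem_vec {m : ℕ} (a : Fin m → E2) (x : E2) (hx : ‖x‖ = 1) :
    √(∑ j, ⟪a j, x⟫ ^ 2) ∈ ratioSet a := by
  have hp : pdist x 0 = 1 := by simp [pdist, hx]
  refine ⟨x, 0, by rw [hp]; norm_num, ?_⟩
  rw [hp, div_one, ← Real.sqrt_sq (norm_nonneg (PhiMap a x - PhiMap a 0)), h_phi]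
  simp

theorem h_cs {m : ℕ} (a : Fin m → E2) (u : E2) :
    ∑ j, ⟪a j, u⟫ ^ 2 ≤ ‖u‖ ^ 2 * ∑ j, ‖a j‖ ^ 2 := by
  rw [Finset.mul_sum]
  refine Finset.sum_le_sum fun j _ => ?_
  rw [← mul_pow, mul_comm, ← sq_abs]
  exact pow_le_pow_left₀ (abs_nonneg _) (abs_real_inner_le_norm _ _) 2

theorem h_ratio_nonneg {m : ℕ} (a : Fin m → E2) : ∀ r ∈ ratioSet a, 0 ≤ r := by
  rintro r ⟨x, y, hxy, rfl⟩
  exact div_nonneg (norm_nonneg _) (h_pdist_nonneg x y)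

theorem h_lipU_sq {m : ℕ} (a : Fin m → E2) : (∑ j, ‖a j‖ ^ 2) / 2 ≤ lipU a ^ 2 := by
  have hb : BddAbove (ratioSet a) := ⟨_, h_ratio_le a _ (h_cs a)⟩
  have hx : ∀ x : E2, ‖x‖ = 1 → ∑ j, ⟪a j, x⟫ ^ 2 ≤ lipU a ^ 2 := fun x hx => by
    have h1 : √(∑ j, ⟪a j, x⟫ ^ 2) ≤ lipU a := le_csSup hb (h_mem_vec a x hx)
    rw [← Real.sq_sqrt (Finset.sum_nonneg fun j _ => sq_nonneg (⟪a j, x⟫ : ℝ))]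
    exact pow_le_pow_left₀ (Real.sqrt_nonneg _) h1 2
  have n1 := h_norm_vec2 1 0 zero_le_one
  have n2 := h_norm_vec2 1 (π / 2) zero_le_one
  have h1 := hx _ n1
  have h2 := hx _ n2
  have : ∑ j, ‖a j‖ ^ 2 = ∑ j, ⟪a j, vec2 (1 * Real.cos 0) (1 * Real.sin 0)⟫ ^ 2 +
      ∑ j, ⟪a j, vec2 (1 * Real.cos (π / 2)) (1 * Real.sin (π / 2))⟫ ^ 2 := by
    rw [← Finset.sum_add_distrib]
    refine Finset.sum_congr rfl fun j _ => ?_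
    rw [h_inner, h_inner, h_vec2_0, h_vec2_1, h_vec2_0, h_vec2_1, EuclideanSpace.norm_sq_eq]
    simp
  linarith

theorem h_lipL_sq {m : ℕ} (a : Fin m → E2) (α : Fin m → ℝ)
    (h0 : ∀ j, a j 0 = ‖a j‖ * Real.cos (α j)) (h1 : ∀ j, a j 1 = ‖a j‖ * Real.sin (α j)) (ψ : ℝ) :
    ∑ j, ‖a j‖ ^ 2 * |Real.cos (2 * α j - ψ)| ≤ ∑ j, ‖a j‖ ^ 2 - 2 * lipL a ^ 2 := by
  have hb : BddBelow (ratioSet a) := ⟨0, h_ratio_nonneg a⟩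
  set u := vec2 (1 * Real.cos (ψ / 2)) (1 * Real.sin (ψ / 2)) with hu
  set v := vec2 (1 * Real.cos (ψ / 2 + π / 2)) (1 * Real.sin (ψ / 2 + π / 2)) with hv
  have nu : ‖u‖ = 1 := h_norm_vec2 1 _ zero_le_one
  have nv : ‖v‖ = 1 := h_norm_vec2 1 _ zero_le_one
  set x : E2 := (1 / 2 : ℝ) • (u + v) with hx
  set y : E2 := (1 / 2 : ℝ) • (v - u) with hy
  have e1 : x - y = u := by rw [hx, hy]; module
  have e2 : x + y = v := by rw [hx, hy]; module
  have hp : pdist x y = 1 := by rw [pdist, e1, e2, nu, nv, min_self]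
  have hmem : ‖PhiMap a x - PhiMap a y‖ ∈ ratioSet a := ⟨x, y, by rw [hp]; norm_num, by rw [hp, div_one]⟩
  have hL : lipL a ≤ ‖PhiMap a x - PhiMap a y‖ := csInf_le hb hmem
  have hL0 : 0 ≤ lipL a := Real.sInf_nonneg (h_ratio_nonneg a)
  have hL2 := pow_le_pow_left₀ hL0 hL 2
  rw [h_phi, e1, e2] at hL2
  have : ∀ j, min (⟪a j, u⟫ ^ 2) (⟪a j, v⟫ ^ 2) =
      ‖a j‖ ^ 2 / 2 - ‖a j‖ ^ 2 * |Real.cos (2 * α j - ψ)| / 2 := fun j => by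
    have i1 : (⟪a j, u⟫ : ℝ) ^ 2 = ‖a j‖ ^ 2 / 2 + ‖a j‖ ^ 2 * Real.cos (2 * α j - ψ) / 2 := by
      rw [h_inner, hu, h_vec2_0, h_vec2_1, h0, h1, show 2 * α j - ψ = 2 * (α j - ψ / 2) by ring,
        Real.cos_two_mul, Real.cos_sub]
      ring
    have i2 : (⟪a j, v⟫ : ℝ) ^ 2 = ‖a j‖ ^ 2 / 2 - ‖a j‖ ^ 2 * Real.cos (2 * α j - ψ) / 2 := by
      rw [h_inner, hv, h_vec2_0, h_vec2_1, h0, h1, show 2 * α j - ψ = 2 * (α j - ψ / 2) by ring,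
        Real.cos_two_mul, Real.cos_sq', Real.cos_add_pi_div_two, Real.sin_add_pi_div_two, Real.sin_sub]
      ring
    rw [i1, i2]
    have hn := sq_nonneg ‖a j‖
    rcases abs_cases (Real.cos (2 * α j - ψ)) with ⟨h, h'⟩ | ⟨h, h'⟩
    · rw [h, min_eq_right]; nlinarith
    · rw [h, min_eq_left]
      · ring
      · nlinarith
  rw [Finset.sum_congr rfl fun j _ => this j, Finset.sum_sub_distrib, ← Finset.sum_div,
    ← Finset.sum_div] at hL2
  linarith

theorem h_lower {m : ℕ} (hm : 3 ≤ m) (a : Fin m → E2) :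
    ENNReal.ofReal ((√(1 - 1 / (m * Real.sin (π / (2 * m)))))⁻¹) ≤ condNum a := by
  unfold condNum
  split_ifs with h
  · exact le_top
  apply ENNReal.ofReal_le_ofReal
  have hL0 : 0 ≤ lipL a := Real.sInf_nonneg (h_ratio_nonneg a)
  have hLp : 0 < lipL a := lt_of_le_of_ne hL0 (Ne.symm h)
  have hU0 : 0 ≤ lipU a := Real.sSup_nonneg (h_ratio_nonneg a)
  have hms := h_ms hm
  choose α h0 h1 using fun j => h_polar (a j)
  have hk := h_key (by omega) (fun j => ‖a j‖ ^ 2) (fun j => 2 * α j) (fun _ => sq_nonneg _) _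
    (h_lipL_sq a α h0 h1)
  have hU := h_lipU_sq a
  set T := ∑ j, ‖a j‖ ^ 2
  set M := (m : ℝ) * Real.sin (π / (2 * m))
  have hc : 0 < 1 - 1 / M := by
    rw [sub_pos, div_lt_one (by linarith)]; exact hms
  rw [← Real.sqrt_inv]
  apply Real.sqrt_le_iff.2
  refine ⟨by positivity, ?_⟩
  have hUp : 0 < lipU a ^ 2 := by
    by_contra hh
    have : lipU a ^ 2 ≤ 0 := not_lt.1 hh
    have hT : 0 ≤ T := Finset.sum_nonneg fun j _ => sq_nonneg _
    nlinarith [pow_pos hLp 2]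
  rw [div_pow, inv_le_comm₀ hc (div_pos hUp (pow_pos hLp 2)), inv_div, div_le_iff₀ hUp]
  have h3 : lipL a ^ 2 ≤ (1 - 1 / M) * (T / 2) := by
    have : (1 - 1 / M) * (T / 2) = (T * M - T) / (2 * M) := by field_simp
    rw [this, le_div_iff₀ (by linarith)]
    linarith
  exact h3.trans (mul_le_mul_of_nonneg_left hU hc.le)

theorem h_upper {m : ℕ} (hm : 3 ≤ m) (hodd : Odd m) :
    condNum (harmonicFrame m) ≤ ENNReal.ofReal ((√(1 - 1 / (m * Real.sin (π / (2 * m)))))⁻¹) := by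
  have hms := h_ms hm
  have hm0 : (3 : ℝ) ≤ m := by exact_mod_cast hm
  have hs : 0 < Real.sin (π / (2 * m)) := Real.sin_pos_of_pos_of_lt_pi (by positivity)
    (div_lt_self pi_pos (by linarith))
  have hc : 0 < 1 - 1 / (m * Real.sin (π / (2 * m))) := by
    rw [sub_pos, div_lt_one (by linarith)]; exact hms
  have hne : (ratioSet (harmonicFrame m)).Nonempty :=
    ⟨_, h_mem_vec _ _ (h_norm_vec2 1 0 zero_le_one)⟩
  have hU : lipU (harmonicFrame m) ≤ √((m : ℝ) / 2) :=
    csSup_le hne (h_ratio_le _ _ fun u => (h_harm_sq hm u).le)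
  have hL : √((m : ℝ) / 2) * √(1 - 1 / (m * Real.sin (π / (2 * m)))) ≤ lipL (harmonicFrame m) := by
    refine le_csInf hne ?_
    rintro r ⟨x, y, hxy, rfl⟩
    have hp : 0 < pdist x y := lt_of_le_of_ne (h_pdist_nonneg x y) hxy.symm
    rw [← Real.sqrt_mul (by positivity), le_div_iff₀ hp]
    refine abs_le_of_sq_le_sq' ?_ (norm_nonneg _) |>.2
    rw [mul_pow, Real.sq_sqrt (by positivity)]
    refine le_trans (le_of_eq ?_) (h_harm_low hm hodd x y)
    congr 1
    field_simp
  have hq : 0 < √((m : ℝ) / 2) := by positivity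
  have hq2 : 0 < √(1 - 1 / (m * Real.sin (π / (2 * m)))) := Real.sqrt_pos.2 hc
  have hLp : 0 < lipL (harmonicFrame m) := lt_of_lt_of_le (mul_pos hq hq2) hL
  unfold condNum
  rw [if_neg hLp.ne']
  apply ENNReal.ofReal_le_ofReal
  rw [div_le_iff₀ hLp, inv_mul_eq_div, le_div_iff₀ hq2]
  exact (mul_le_mul_of_nonneg_right hU hq2.le).trans hL

/-- For every odd `m ≥ 3`, the harmonic frame `E_m` satisfies
`β_{E_m} = (1 − 1/(m·sin(π/(2m))))^{−1/2}`, which is the minimal condition number. -/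
theorem stmt9 {m : ℕ} (hm : 3 ≤ m) (hodd : Odd m) :
    condNum (harmonicFrame m) =
        ENNReal.ofReal (1 - 1 / (m * Real.sin (π / (2 * m)))) ^ (-(1 / 2) : ℝ) ∧
    condNum (harmonicFrame m) = ⨅ A : Fin m → E2, condNum A := by
  have hms := h_ms hm
  have hc : 0 < 1 - 1 / (m * Real.sin (π / (2 * m))) := by
    rw [sub_pos, div_lt_one (by linarith)]; exact hms
  have e : ENNReal.ofReal (1 - 1 / (m * Real.sin (π / (2 * m)))) ^ (-(1 / 2) : ℝ) =
      ENNReal.ofReal ((√(1 - 1 / (m * Real.sin (π / (2 * m)))))⁻¹) := by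
    rw [ENNReal.ofReal_rpow_of_pos hc, Real.rpow_neg hc.le, ← Real.sqrt_eq_rpow]
  have h1 : condNum (harmonicFrame m) =
      ENNReal.ofReal ((√(1 - 1 / (m * Real.sin (π / (2 * m)))))⁻¹) :=
    le_antisymm (h_upper hm hodd) (h_lower hm _)
  refine ⟨h1.trans e.symm, le_antisymm ?_ (iInf_le _ _)⟩
  rw [h1]
  exact le_iInf fun A => h_lower hm A
end
end

section
/- Let m ≥ 3 be an integer with an odd factor, let ζ = e^{iπ/m}, and let ε = (ε_1,…,ε_m) ∈ {±1}^m satisfy ∑_{j=1}^m ε_j·ζ^j = 0. Set e_j = ε_j·(cos(jπ/m), sin(jπ/m)) for j = 1,…,m. Then (e_1,…,e_m) is an edge family of size m (the vectors are nonzero with pairwise distinct directions and sum to zero), and it is optimal: r(e) = 1/(2m·sin(π/(2m))) and r(e) ≤ r(e') for every edge family e' of size m. -/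
noncomputable section

open Real
open scoped RealInnerProductSpace ENNReal

theorem s12_inner (x y : ℝ) (u : E2) : ⟪vec2 x y, u⟫ = x * u 0 + y * u 1 := by
  simp [vec2, PiLp.inner_apply, Fin.sum_univ_two, mul_comm]

theorem s12_norm_sq (x y : ℝ) : ‖vec2 x y‖ ^ 2 = x ^ 2 + y ^ 2 := by
  rw [← real_inner_self_eq_norm_sq, s12_inner]
  simp [vec2]; ring

theorem s12_norm_cs (a : ℝ) : ‖vec2 (cos a) (sin a)‖ = 1 := by
  have h := s12_norm_sq (cos a) (sin a)
  rw [cos_sq_add_sin_sq] at h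
  have h0 := norm_nonneg (vec2 (cos a) (sin a))
  nlinarith

theorem s12_norm_diff (a b : ℝ) (h0 : a ≤ b) (h1 : b ≤ a + π) :
    ‖vec2 (cos a) (sin a) - vec2 (cos b) (sin b)‖ = 2 * sin ((b - a) / 2) := by
  have e : vec2 (cos a) (sin a) - vec2 (cos b) (sin b) =
      vec2 (cos a - cos b) (sin a - sin b) := by
    ext i; fin_cases i <;> simp [vec2]
  have hs : 0 ≤ sin ((b - a) / 2) :=
    sin_nonneg_of_nonneg_of_le_pi (by linarith) (by linarith [pi_pos])
  have hn := s12_norm_sq (cos a - cos b) (sin a - sin b)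
  rw [← e] at hn
  have hc : cos (b - a) = 1 - 2 * sin ((b - a) / 2) ^ 2 := by
    have := cos_two_mul ((b - a) / 2)
    have h2 := sin_sq_add_cos_sq ((b - a) / 2)
    rw [show 2 * ((b - a) / 2) = b - a by ring] at this
    linarith
  rw [cos_sub] at hc
  have ha := sin_sq_add_cos_sq a
  have hb := sin_sq_add_cos_sq b
  refine (pow_left_inj₀ (norm_nonneg _) (by positivity) (two_ne_zero)).1 ?_
  rw [hn]; nlinarith

theorem s12_core (m : ℕ) (hm : 0 < m) (l θ : ℕ → ℝ)
    (hmono : ∀ k < m, θ k ≤ θ (k + 1)) (hend : θ m = θ 0 + π) (D : ℝ) (hD0 : 0 ≤ D)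
    (hl : ∀ k, 0 ≤ l k)
    (hD : ∀ u : E2, ‖u‖ = 1 →
      ∑ k ∈ Finset.range m, l k * |⟪vec2 (cos (θ k)) (sin (θ k)), u⟫| ≤ D) :
    ∑ k ∈ Finset.range m, l k ≤ D * (m * sin (π / (2 * m))) := by
  set t : ℕ → E2 := fun k => vec2 (cos (θ k)) (sin (θ k)) with ht
  set S : ℕ → E2 := fun k => ∑ j ∈ Finset.range k, l j • t j with hS
  set v : ℕ → E2 := fun k => (2 : ℝ) • S k - S m with hv
  have htm : t m = - t 0 := by
    simp only [ht, hend, cos_add_pi, sin_add_pi]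
    ext i; fin_cases i <;> simp [vec2]
  have htt : ∀ k, ⟪t k, t k⟫ = 1 := fun k => by
    rw [real_inner_self_eq_norm_sq]; simp [ht, s12_norm_cs]
  have hvs : ∀ k, k ≤ m → v k = ∑ j ∈ Finset.range m, ((if j < k then 1 else -1 : ℝ) * l j) • t j := by
    intro k hk
    have : S k = ∑ j ∈ Finset.range m, ((if j < k then 1 else 0 : ℝ) * l j) • t j := by
      simp only [hS]
      rw [← Finset.sum_subset (Finset.range_subset_range.2 hk)]
      · refine Finset.sum_congr rfl fun j hj => ?_
        rw [if_pos (Finset.mem_range.1 hj), one_mul]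
      · intro j _ hj
        rw [if_neg (by simpa using hj)]; simp
    simp only [hv, this]
    simp only [hS]
    rw [Finset.smul_sum, ← Finset.sum_sub_distrib]
    refine Finset.sum_congr rfl fun j _ => ?_
    rw [smul_smul, ← sub_smul]
    congr 1
    split_ifs <;> ring
  have hvn : ∀ k, k ≤ m → ‖v k‖ ≤ D := by
    intro k hk
    by_cases h0 : v k = 0
    · simpa [h0] using hD0
    have hn : ‖v k‖ ≠ 0 := norm_ne_zero_iff.2 h0
    have h1 : ‖(‖v k‖⁻¹ • v k)‖ = 1 := by
      rw [norm_smul, norm_inv, norm_norm, inv_mul_cancel₀ hn]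
    refine le_trans ?_ (hD _ h1)
    have h2 : ‖v k‖ = ⟪v k, ‖v k‖⁻¹ • v k⟫ := by
      rw [real_inner_smul_right, real_inner_self_eq_norm_sq]; field_simp
    set u := ‖v k‖⁻¹ • v k
    rw [h2, hvs k hk, sum_inner]
    refine Finset.sum_le_sum fun j _ => ?_
    rw [real_inner_smul_left]
    have h3 := hl j
    have h4 := le_abs_self ⟪t j, u⟫
    have h5 := neg_abs_le ⟪t j, u⟫
    change _ ≤ l j * |⟪t j, u⟫|
    split_ifs <;> nlinarith
  have habel : ∀ n, ∑ k ∈ Finset.range n, ⟪v (k + 1), t k - t (k + 1)⟫ =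
      2 * ∑ k ∈ Finset.range n, l k + ⟪v 0, t 0⟫ - ⟪v n, t n⟫ := by
    intro n
    induction n with
    | zero => simp
    | succ n ih =>
      have : v (n + 1) = v n + (2 * l n) • t n := by
        simp only [hv, hS, Finset.sum_range_succ, smul_add, smul_smul]; abel
      rw [Finset.sum_range_succ, Finset.sum_range_succ, ih, inner_sub_right]
      have h2 : ⟪v (n + 1), t n⟫ = ⟪v n, t n⟫ + 2 * l n := by
        rw [this, inner_add_left, real_inner_smul_left, htt]; ring
      rw [h2]; ring
  have hA := habel m
  have hv0 : v 0 = - S m := by simp [hv, hS]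
  have hvm : v m = S m := by simp only [hv]; rw [two_smul]; abel
  rw [hv0, hvm, htm, inner_neg_left, inner_neg_right] at hA
  -- angle bounds
  have hmon2 : ∀ i j, i ≤ j → j ≤ m → θ i ≤ θ j := by
    intro i j hij
    induction j, hij using Nat.le_induction with
    | base => intro _; exact le_rfl
    | succ j hj ih => intro h; exact (ih (by omega)).trans (hmono j (by omega))
  have hgap : ∀ k < m, θ (k + 1) ≤ θ k + π := by
    intro k hk
    have h1 := hmon2 0 k (by omega) (by omega)
    have h2 := hmon2 (k + 1) m (by omega) le_rfl
    linarith
  have hB : ∑ k ∈ Finset.range m, ⟪v (k + 1), t k - t (k + 1)⟫ ≤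
      ∑ k ∈ Finset.range m, D * (2 * sin ((θ (k + 1) - θ k) / 2)) := by
    refine Finset.sum_le_sum fun k hk => ?_
    have hk := Finset.mem_range.1 hk
    rw [← s12_norm_diff _ _ (hmono k hk) (hgap k hk)]
    refine (real_inner_le_norm _ _).trans ?_
    exact mul_le_mul_of_nonneg_right (hvn _ hk) (norm_nonneg _)
  have hm' : (0 : ℝ) < m := by exact_mod_cast hm
  have hJ := (strictConcaveOn_sin_Icc.concaveOn).le_map_sum (t := Finset.range m)
    (w := fun _ => (1 / m : ℝ)) (p := fun k => (θ (k + 1) - θ k) / 2)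
    (fun _ _ => by positivity) (by simp [hm'.ne'])
    (fun k hk => by
      have hk := Finset.mem_range.1 hk
      constructor
      · linarith [hmono k hk]
      · linarith [hgap k hk, pi_pos])
  have hsum : ∑ k ∈ Finset.range m, (1 / m : ℝ) • ((θ (k + 1) - θ k) / 2) = π / (2 * m) := by
    rw [← Finset.smul_sum, ← Finset.sum_div, Finset.sum_range_sub, hend]
    simp; field_simp
  rw [hsum, ← Finset.smul_sum, smul_eq_mul] at hJ
  have hJ' : ∑ k ∈ Finset.range m, sin ((θ (k + 1) - θ k) / 2) ≤ m * sin (π / (2 * m)) := by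
    have := mul_le_mul_of_nonneg_left hJ hm'.le
    rwa [← mul_assoc, mul_one_div_cancel hm'.ne', one_mul] at this
  rw [← Finset.mul_sum, ← Finset.mul_sum] at hB
  have := mul_le_mul_of_nonneg_left hJ' hD0
  linarith

theorem s12_angle (v : E2) : ∃ θ : ℝ, 0 ≤ θ ∧ θ ≤ π ∧
    ∀ u : E2, |⟪v, u⟫| = ‖v‖ * |⟪vec2 (cos θ) (sin θ), u⟫| := by
  set z : ℂ := ⟨v 0, v 1⟩ with hz
  have hv : v = vec2 (v 0) (v 1) := by
    ext i; fin_cases i <;> simp [vec2]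
  have hn : ‖v‖ = ‖z‖ := by
    refine (pow_left_inj₀ (norm_nonneg _) (norm_nonneg _) (two_ne_zero)).1 ?_
    conv_lhs => rw [hv]
    rw [s12_norm_sq, Complex.sq_norm, Complex.normSq_apply]; ring
  have h0 : v 0 = ‖z‖ * cos z.arg := (Complex.norm_mul_cos_arg z).symm
  have h1 : v 1 = ‖z‖ * sin z.arg := (Complex.norm_mul_sin_arg z).symm
  have hi : ∀ u : E2, ⟪v, u⟫ = ‖v‖ * (cos z.arg * u 0 + sin z.arg * u 1) := by
    intro u
    conv_lhs => rw [hv]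
    rw [s12_inner, hn, h0, h1]; ring
  have hp := norm_nonneg v
  rcases le_or_gt 0 z.arg with h | h
  · refine ⟨z.arg, h, Complex.arg_le_pi z, fun u => ?_⟩
    rw [hi, s12_inner, abs_mul, abs_of_nonneg hp]
  · refine ⟨z.arg + π, by linarith [Complex.neg_pi_lt_arg z], by linarith, fun u => ?_⟩
    rw [hi, s12_inner, abs_mul, abs_of_nonneg hp, cos_add_pi, sin_add_pi, ← abs_neg]
    congr 2; ring

theorem s12_le_sup {m : ℕ} (e : Fin m → E2) (u : E2) (hu : ‖u‖ = 1) :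
    ∑ j, |⟪e j, u⟫| ≤ sSup {s | ∃ u : E2, ‖u‖ = 1 ∧ s = ∑ j, |⟪e j, u⟫|} := by
  refine le_csSup ⟨∑ j, ‖e j‖, ?_⟩ ⟨u, hu, rfl⟩
  rintro s ⟨w, hw, rfl⟩
  refine Finset.sum_le_sum fun j _ => ?_
  simpa [hw] using abs_real_inner_le_norm (e j) w

theorem s12_sin_pos {m : ℕ} (hm : 0 < m) : 0 < sin (π / (2 * m)) := by
  have hm' : (1 : ℝ) ≤ m := by exact_mod_cast hm
  apply sin_pos_of_pos_of_lt_pi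
  · positivity
  · rw [div_lt_iff₀ (by positivity)]; nlinarith [pi_pos]

theorem s12_lower {m : ℕ} (hm : 0 < m) (e : Fin m → E2) (hne : ∀ j, e j ≠ 0) :
    1 / (2 * m * sin (π / (2 * m))) ≤ rRatio e := by
  choose φ hφ0 hφ1 hφ using fun j => s12_angle (e j)
  set σ := Tuple.sort φ with hσ
  have hmono : Monotone (φ ∘ σ) := Tuple.monotone_sort φ
  set D := sSup {s | ∃ u : E2, ‖u‖ = 1 ∧ s = ∑ j, |⟪e j, u⟫|} with hDdef
  have hm' : (0 : ℝ) < m := by exact_mod_cast hm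
  have hs := s12_sin_pos hm
  have hD0 : 0 ≤ D := le_trans (Finset.sum_nonneg fun j _ => abs_nonneg _)
    (s12_le_sup e (vec2 (cos 0) (sin 0)) (s12_norm_cs 0))
  have key := s12_core m hm (fun k => if h : k < m then ‖e (σ ⟨k, h⟩)‖ else 0)
    (fun k => if h : k < m then φ (σ ⟨k, h⟩) else φ (σ ⟨0, hm⟩) + π)
    (by
      intro k hk
      by_cases h : k + 1 < m
      · simp only [hk, h, dif_pos]
        exact hmono (by simp [Fin.le_def])
      · simp only [hk, h, dif_pos, dif_neg, not_false_eq_true]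
        linarith [hφ1 (σ ⟨k, hk⟩), hφ0 (σ ⟨0, hm⟩)])
    (by simp [hm]) D hD0
    (by intro k; split_ifs <;> simp)
    (by
      intro u hu
      rw [Finset.sum_range]
      refine le_trans (le_of_eq ?_) (s12_le_sup e u hu)
      rw [← Equiv.sum_comp σ (fun j => |⟪e j, u⟫|)]
      refine Finset.sum_congr rfl fun j _ => ?_
      simp [hφ])
  have hL : ∑ k ∈ Finset.range m, (if h : k < m then ‖e (σ ⟨k, h⟩)‖ else 0) = ∑ j, ‖e j‖ := by
    rw [Finset.sum_range, ← Equiv.sum_comp σ (fun j => ‖e j‖)]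
    simp
  rw [hL] at key
  have hLpos : 0 < ∑ j, ‖e j‖ :=
    Finset.sum_pos (fun j _ => norm_pos_iff.2 (hne j)) ⟨⟨0, hm⟩, Finset.mem_univ _⟩
  unfold rRatio
  rw [← hDdef, div_le_div_iff₀ (by positivity) (by positivity)]
  nlinarith

theorem s12_periodic (m : ℕ) (hm : 0 < m) :
    Function.Periodic (fun x : ℝ => ∑ j ∈ Finset.range m, |cos (x + j * (π / m))|) (π / m) := by
  intro x
  have hm' : (0 : ℝ) < m := by exact_mod_cast hm
  have h1 := Finset.sum_range_succ (fun j : ℕ => |cos (x + j * (π / m))|) m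
  have h2 := Finset.sum_range_succ' (fun j : ℕ => |cos (x + j * (π / m))|) m
  have h3 : x + (m : ℝ) * (π / m) = x + π := by field_simp
  rw [h3, cos_add_pi, abs_neg] at h1
  simp only [Nat.cast_zero, zero_mul, add_zero] at h2
  have h4 : ∑ j ∈ Finset.range m, |cos (x + π / m + j * (π / m))| =
      ∑ j ∈ Finset.range m, |cos (x + (j + 1 : ℕ) * (π / m))| := by
    refine Finset.sum_congr rfl fun j _ => ?_
    push_cast; congr 2; ring
  try dsimp only
  rw [h4]; linarith

theorem s12_upper (m : ℕ) (hm : 0 < m) (x : ℝ) :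
    (∑ j ∈ Finset.range m, |cos (x + j * (π / m))|) * sin (π / (2 * m)) ≤ 1 := by
  have hm' : (0 : ℝ) < m := by exact_mod_cast hm
  obtain ⟨y, hy, hxy⟩ := (s12_periodic m hm).exists_mem_Ico (by positivity) x (-(π / 2))
  try dsimp only at hxy
  rw [hxy]
  have habs : ∑ j ∈ Finset.range m, |cos (y + j * (π / m))| =
      ∑ j ∈ Finset.range m, cos (y + j * (π / m)) := by
    refine Finset.sum_congr rfl fun j hj => ?_
    have hj : (j : ℝ) + 1 ≤ m := by exact_mod_cast Finset.mem_range.1 hj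
    have hp : 0 < π / m := by positivity
    have h1 := mul_le_mul_of_nonneg_right hj hp.le
    have h3 : (m : ℝ) * (π / m) = π := by field_simp
    have h4 : 0 ≤ (j : ℝ) * (π / m) := by positivity
    refine abs_of_nonneg (cos_nonneg_of_neg_pi_div_two_le_of_le ?_ ?_)
    · linarith [hy.1]
    · linarith [hy.2]
  have htel : ∀ n : ℕ, 2 * ((∑ j ∈ Finset.range n, cos (y + j * (π / m))) * sin (π / (2 * m))) =
      sin (y + n * (π / m) - π / (2 * m)) - sin (y - π / (2 * m)) := by
    intro n
    induction n with
    | zero => simp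
    | succ n ih =>
      rw [Finset.sum_range_succ, add_mul, mul_add, ih]
      have : y + ((n + 1 : ℕ) : ℝ) * (π / m) - π / (2 * m) = y + n * (π / m) + π / (2 * m) := by
        push_cast; field_simp; ring
      rw [this, sin_add (y + n * (π / m)), sin_sub (y + n * (π / m))]; ring
  have := htel m
  rw [habs]
  have h3 : y + (m : ℝ) * (π / m) - π / (2 * m) = y - π / (2 * m) + π := by field_simp; ring
  rw [h3, sin_add_pi] at this
  linarith [neg_one_le_sin (y - π / (2 * m))]

/-- If `m ≥ 3` has an odd factor, `ζ = e^{iπ/m}`, and signs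
`ε ∈ {±1}^m` satisfy `∑ ε_j ζ^j = 0`, then `e_j = ε_j·(cos(jπ/m), sin(jπ/m))` is an
optimal edge family, with `r(e) = 1/(2m·sin(π/(2m)))`. -/
theorem stmt12 {m : ℕ} (hm : 3 ≤ m) (hodd : ∃ k, Odd k ∧ 1 < k ∧ k ∣ m)
    (ε : Fin m → ℝ) (hε : ∀ j, ε j = 1 ∨ ε j = -1)
    (hzero : ∑ j : Fin m, (ε j : ℂ) * Complex.exp (π * Complex.I / m) ^ ((j : ℕ) + 1) = 0)
    (e : Fin m → E2)
    (he : ∀ j, e j = ε j • vec2 (Real.cos (((j : ℕ) + 1) * π / m))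
        (Real.sin (((j : ℕ) + 1) * π / m))) :
    IsEdgeFamily e ∧
    rRatio e = 1 / (2 * m * Real.sin (π / (2 * m))) ∧
    ∀ e' : Fin m → E2, IsEdgeFamily e' → rRatio e ≤ rRatio e' := by
  have hm0 : 0 < m := by omega
  have hm' : (0 : ℝ) < m := by exact_mod_cast hm0
  have hs := s12_sin_pos hm0
  have habs : ∀ j, |ε j| = 1 := fun j => by rcases hε j with h | h <;> simp [h]
  have hnorm : ∀ j, ‖e j‖ = 1 := fun j => by
    rw [he, norm_smul, s12_norm_cs, Real.norm_eq_abs, habs, one_mul]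
  have hne : ∀ j, e j ≠ 0 := fun j h => by
    have := hnorm j
    simp [h] at this
  have hexp : ∀ j : ℕ, Complex.exp (π * Complex.I / m) ^ (j + 1) =
      (cos (((j : ℕ) + 1) * π / m) : ℂ) + (sin (((j : ℕ) + 1) * π / m) : ℂ) * Complex.I := by
    intro j
    rw [← Complex.exp_nat_mul, Complex.ofReal_cos, Complex.ofReal_sin, ← Complex.exp_mul_I]
    congr 1
    push_cast; ring
  have hedge : IsEdgeFamily e := by
    refine ⟨hne, ?_, ?_⟩
    · -- distinct directions
      have hlt : ∀ i j : Fin m, i < j → e i ≠ e j := by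
        intro i j hij h
        rw [he, he] at h
        have h0 := congrArg (fun w : E2 => w 0) h
        have h1 := congrArg (fun w : E2 => w 1) h
        simp [vec2] at h0 h1
        have hsin : 0 < sin ((((j : ℕ) : ℝ) + 1) * π / m - (((i : ℕ) : ℝ) + 1) * π / m) := by
          have hij' : ((i : ℕ) : ℝ) < ((j : ℕ) : ℝ) := by exact_mod_cast hij
          have hj : ((j : ℕ) : ℝ) < m := by exact_mod_cast j.2
          have hi : (0 : ℝ) ≤ ((i : ℕ) : ℝ) := by positivity
          have heq : (((j : ℕ) : ℝ) + 1) * π / m - (((i : ℕ) : ℝ) + 1) * π / m =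
            (((j : ℕ) : ℝ) - ((i : ℕ) : ℝ)) * π / m := by ring
          rw [heq]
          apply sin_pos_of_pos_of_lt_pi
          · have : 0 < ((j : ℕ) : ℝ) - ((i : ℕ) : ℝ) := by linarith
            positivity
          · rw [div_lt_iff₀ hm']; nlinarith [pi_pos]
        rw [sin_sub] at hsin
        set a := (((i : ℕ) : ℝ) + 1) * π / m
        set b := (((j : ℕ) : ℝ) + 1) * π / m
        have : ε i * (sin b * cos a - cos b * sin a) = 0 := by
          linear_combination sin b * h0 - cos b * h1
        rcases mul_eq_zero.1 this with h | h
        · have := habs i; simp [h] at this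
        · linarith
      intro i j hij
      rw [hnorm, hnorm, inv_one, one_smul, one_smul]
      rcases lt_or_gt_of_ne hij with h | h
      · exact hlt i j h
      · exact (hlt j i h).symm
    · have h0 := congrArg Complex.re hzero
      have h1 := congrArg Complex.im hzero
      simp only [hexp, Complex.re_sum, Complex.im_sum] at h0 h1
      simp [-Complex.ofReal_cos, -Complex.ofReal_sin] at h0 h1
      ext i
      fin_cases i
      · simpa [he, vec2] using h0
      · simpa [he, vec2] using h1
  have hlow := s12_lower hm0 e hne
  have hup : rRatio e ≤ 1 / (2 * m * Real.sin (π / (2 * m))) := by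
    have hsup : sSup {s | ∃ u : E2, ‖u‖ = 1 ∧ s = ∑ j, |⟪e j, u⟫|} ≤ 1 / sin (π / (2 * m)) := by
      refine csSup_le ⟨_, vec2 (cos 0) (sin 0), s12_norm_cs 0, rfl⟩ ?_
      rintro s ⟨u, hu, rfl⟩
      rw [le_div_iff₀ hs]
      obtain ⟨ψ, -, -, hψ⟩ := s12_angle u
      refine le_trans (le_of_eq ?_) (s12_upper m hm0 (π / m - ψ))
      congr 1
      rw [Finset.sum_range]
      refine Finset.sum_congr rfl fun j _ => ?_
      rw [real_inner_comm, hψ, hu, one_mul, he, real_inner_smul_right, abs_mul, habs, one_mul,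
        s12_inner]
      have : π / m - ψ + (j : ℕ) * (π / m) = ((j : ℕ) + 1) * π / m - ψ := by ring
      rw [this, cos_sub]
      simp [vec2]
      congr 1; ring
    unfold rRatio
    simp only [hnorm]
    simp only [Finset.sum_const, Finset.card_univ, Fintype.card_fin, nsmul_eq_mul, mul_one]
    calc _ ≤ 1 / sin (π / (2 * m)) / (2 * m) := by gcongr
      _ = _ := by rw [div_div, mul_comm (sin _)]
  have heq := le_antisymm hup hlow
  exact ⟨hedge, heq, fun e' he' => heq ▸ s12_lower hm0 e' he'.1⟩
end
end
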